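/- Let G_1 and G_2 be two vertex-disjoint 2-edge-colored graphs with Hamiltonian alternating cycles C_1 = x_0 x_1 ⋯ x_{2n−1} x_0 and C_2 = y_0 y_1 ⋯ y_{2m−1} y_0 respectively, and let G ∈ G_1 ⊕ G_2. If there is no good pair in G, and for each i ∈ {1,2} there is a vertex of C_i that is non-singular with respect to C_{3−i}, then for each vertex v ∈ V(G) and each even integer l ∈ [4m_1, 2M_2], where m_1 = min{n, m} and M_2 = max{n, m}, there is an alternating cycle of length l in G passing through v. -/

import Mathlib

/-- An alternating cycle of length `N` in the 2-edge-colored graph `(G, c)`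
(colors: `true` = red, `false` = blue). -/
def IsAltCycle {V : Type*} (G : SimpleGraph V) (c : Sym2 V → Bool) {N : ℕ}
    (x : ZMod N → V) : Prop :=
  Function.Injective x ∧ (∀ i, G.Adj (x i) (x (i + 1))) ∧
    ∀ i, c s(x i, x (i + 1)) ≠ c s(x (i + 1), x (i + 2))

/-- There is a good pair of edges between the two vertex-disjoint alternating
cycles `x` and `y`. -/
def HasGoodPair {V : Type*} (G : SimpleGraph V) (c : Sym2 V → Bool) {N M : ℕ}
    (x : ZMod N → V) (y : ZMod M → V) : Prop :=
  ∃ (s s' : ZMod N) (t t' : ZMod M),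
    (s' = s - 1 ∨ s' = s + 1) ∧ (t' = t - 1 ∨ t' = t + 1) ∧
    G.Adj (x s) (y t) ∧ G.Adj (x s') (y t') ∧
    c s(x s, x s') = c s(x s, y t) ∧
    c s(x s', y t') = c s(x s, y t) ∧
    c s(y t', y t) = c s(x s, y t)

/-- `G` is a colored generalized sum `G ∈ G₁ ⊕ G₂` of two vertex-disjoint 2-edge-colored
graphs `G₁`, `G₂` with Hamiltonian alternating cycles `C₁ = x` (of length `2n`) and
`C₂ = y` (of length `2m`): here `G₁`, `G₂` are the induced colored subgraphs of `G` on
`V(G₁) = range x` and `V(G₂) = range y`, so the conditions are that `x` and `y` are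
alternating cycles of `G` with disjoint ranges covering `V(G)` (Hamiltonicity of `Cᵢ`
in `Gᵢ`), and between any two vertices of different parts there is exactly one
(arbitrarily colored) edge of `G`. -/
def IsCGSHam {V : Type*} (G : SimpleGraph V) (c : Sym2 V → Bool) {n m : ℕ}
    (x : ZMod (2 * n) → V) (y : ZMod (2 * m) → V) : Prop :=
  IsAltCycle G c x ∧ IsAltCycle G c y ∧
  Disjoint (Set.range x) (Set.range y) ∧
  (∀ v : V, v ∈ Set.range x ∪ Set.range y) ∧
  (∀ (i : ZMod (2 * n)) (j : ZMod (2 * m)), G.Adj (x i) (y j))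

/-- The set of exterior edges of a colored generalized sum with parts `range x` and
`range y`: the edges joining the two parts. -/
def extEdges {V : Type*} {N M : ℕ} (x : ZMod N → V) (y : ZMod M → V) : Set (Sym2 V) :=
  {e | ∃ i j, e = s(x i, y j)}

/-- The number of red exterior edges incident with `v`. -/
noncomputable def dred {V : Type*} (c : Sym2 V → Bool) {N M : ℕ}
    (x : ZMod N → V) (y : ZMod M → V) (v : V) : ℕ :=
  {e : Sym2 V | e ∈ extEdges x y ∧ v ∈ e ∧ c e = true}.ncard

/-- The number of blue exterior edges incident with `v`. -/
noncomputable def dblue {V : Type*} (c : Sym2 V → Bool) {N M : ℕ}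
    (x : ZMod N → V) (y : ZMod M → V) (v : V) : ℕ :=
  {e : Sym2 V | e ∈ extEdges x y ∧ v ∈ e ∧ c e = false}.ncard

/-- The vertex `x i` of `C₁` is singular with respect to `C₂`: the set of edges from
`x i` to `V(C₂)` (in a colored generalized sum these are all pairs `x i - y j`) is
nonempty and they all have the same color. -/
def SingularX {V : Type*} (c : Sym2 V → Bool) {N M : ℕ}
    (x : ZMod N → V) (y : ZMod M → V) (i : ZMod N) : Prop :=
  (∃ _j : ZMod M, True) ∧ ∀ j j' : ZMod M, c s(x i, y j) = c s(x i, y j')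

/-- The vertex `y j` of `C₂` is singular with respect to `C₁`. -/
def SingularY {V : Type*} (c : Sym2 V → Bool) {N M : ℕ}
    (x : ZMod N → V) (y : ZMod M → V) (j : ZMod M) : Prop :=
  (∃ _i : ZMod N, True) ∧ ∀ i i' : ZMod N, c s(x i, y j) = c s(x i', y j)

/-!
Call a cross edge `x s - y t` a *bridge* if one can leave `x` and enter `y` through it while
alternating. A bridge `x s - y t` makes the cross edge `x (s + 1) - y (t - 1)` again a bridge:
otherwise the two edges would form a good pair. Going around both cycles, all pairs on the same
antidiagonal are then bridges, and antidiagonals are indexed by `s + t` modulo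
`gcd (2 * n) (2 * m) = 2 * gcd n m`. If there are bridges from `x` to `y` and back, one follows `x`
for `p` vertices, crosses to `y`, follows `y` for `q` vertices and crosses back; this closes up as
soon as `q - p` has the right even residue modulo `2 * gcd n m`, so `p + q` can be prescribed and
the starting vertex is free. The non-singular vertices provide bridges in both directions, possibly
after reversing `y`.
-/

/-- The color of the edge by which the cycle `x` leaves the vertex `x i`. -/
def edgeColor {V : Type*} (c : Sym2 V → Bool) {N : ℕ} (x : ZMod N → V) (i : ZMod N) : Bool :=
  c s(x i, x (i + 1))

/-- The edge `x s - y t` is a bridge from the cycle `x` to the cycle `y`: an alternating path that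
reaches `x s` along `x` may cross to `y t` and continue alternatingly along `y`, both cycles being
traversed in increasing order of their indices. -/
def IsBridge {V : Type*} (c : Sym2 V → Bool) {N M : ℕ} (x : ZMod N → V) (y : ZMod M → V)
    (s : ZMod N) (t : ZMod M) : Prop :=
  c s(x s, y t) = edgeColor c x s ∧ edgeColor c y t = !edgeColor c x s

/-- The closed walk of length `p + q` that visits `x i, …, x (i + p - 1)`, then
`y j, …, y (j + q - 1)`, and returns to `x i` at time `p + q` (later values are irrelevant). -/
def splice {V : Type*} {N M : ℕ} (x : ZMod N → V) (y : ZMod M → V) (i : ZMod N) (j : ZMod M)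
    (p q : ℕ) (t : ℕ) : V :=
  if t < p then x (i + t) else if t < p + q then y (j + (t - p : ℕ)) else x i

section

variable {V : Type*} {G : SimpleGraph V} {c : Sym2 V → Bool} {N M : ℕ}
  {x : ZMod N → V} {y : ZMod M → V}

theorem apply_val_add_one {α : Type*} {l : ℕ} [NeZero l] {g : ℕ → α} (hg : g l = g 0)
    (i : ZMod l) : g (i + 1).val = g (i.val + 1) := by
  rw [ZMod.val_add, ZMod.val_one_eq_one_mod, Nat.add_mod_mod]
  rcases (Nat.add_one_le_of_lt i.val_lt).lt_or_eq with h | h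
  · rw [Nat.mod_eq_of_lt h]
  · rw [h, Nat.mod_self, hg]

theorem isAltCycle_of_closed_walk {l : ℕ} [NeZero l] {w : ℕ → V} {f : ℕ → Bool}
    (hw : w l = w 0) (hinj : Set.InjOn w (Set.Iio l))
    (hadj : ∀ t < l, G.Adj (w t) (w (t + 1))) (hcol : ∀ t < l, c s(w t, w (t + 1)) = f t)
    (hf : f l = f 0) (halt : ∀ t, f (t + 1) = !f t) :
    IsAltCycle G c fun i : ZMod l ↦ w i.val := by
  have hcolor (i : ZMod l) : c s(w i.val, w (i + 1).val) = f i.val := by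
    rw [apply_val_add_one hw, hcol _ i.val_lt]
  refine ⟨fun i j h ↦ ZMod.val_injective l (hinj i.val_lt j.val_lt h), fun i ↦ ?_, fun i ↦ ?_⟩
  · simpa only [apply_val_add_one hw] using hadj _ i.val_lt
  · rw [← one_add_one_eq_two, ← add_assoc, hcolor, hcolor, apply_val_add_one hf, halt]
    simp

theorem IsAltCycle.edgeColor_add_one (hx : IsAltCycle G c x) (i : ZMod N) :
    edgeColor c x (i + 1) = !edgeColor c x i := by
  have h := hx.2.2 i
  rw [← one_add_one_eq_two, ← add_assoc] at h
  exact Bool.eq_not.mpr h.symm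

theorem IsAltCycle.edgeColor_sub_one (hx : IsAltCycle G c x) (i : ZMod N) :
    edgeColor c x (i - 1) = !edgeColor c x i := by
  simpa using congrArg Bool.not (hx.edgeColor_add_one (i - 1)).symm

theorem IsAltCycle.edgeColor_add_intCast_eq_iff (hx : IsAltCycle G c x) (i : ZMod N) (k : ℤ) :
    edgeColor c x (i + k) = edgeColor c x i ↔ Even k := by
  induction k using Int.induction_on with
  | zero => simp
  | succ k ih =>
    push_cast at ih ⊢
    rw [← add_assoc, hx.edgeColor_add_one, Int.even_add_one, ← ih, Bool.not_eq]
  | pred k ih =>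
    push_cast at ih ⊢
    rw [← add_sub_assoc, hx.edgeColor_sub_one, Int.even_sub_one, ← ih, Bool.not_eq]

theorem IsAltCycle.edgeColor_comp_neg (hx : IsAltCycle G c x) (i : ZMod N) :
    edgeColor c (fun k ↦ x (-k)) i = !edgeColor c x (-i) := by
  rw [← hx.edgeColor_sub_one]
  simp only [edgeColor, sub_add_cancel]
  rw [Sym2.eq_swap, neg_add']

theorem IsAltCycle.comp_neg (hx : IsAltCycle G c x) : IsAltCycle G c fun i ↦ x (-i) := by
  refine ⟨hx.1.comp neg_injective, fun i ↦ ?_, fun i ↦ ?_⟩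
  · simpa [neg_add_eq_sub] using (hx.2.1 (-(i + 1))).symm
  · rw [← one_add_one_eq_two, ← add_assoc]
    change edgeColor c (fun k ↦ x (-k)) i ≠ edgeColor c (fun k ↦ x (-k)) (i + 1)
    rw [hx.edgeColor_comp_neg, hx.edgeColor_comp_neg, neg_add', hx.edgeColor_sub_one]
    simp

theorem HasGoodPair.symm (h : HasGoodPair G c x y) : HasGoodPair G c y x := by
  obtain ⟨s, s', t, t', hs, ht, h, h', h₁, h₂, h₃⟩ := h
  refine ⟨t, t', s, s', ht, hs, h.symm, h'.symm, ?_, ?_, ?_⟩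
  · rw [Sym2.eq_swap, h₃, Sym2.eq_swap]
  · rw [Sym2.eq_swap, h₂, Sym2.eq_swap]
  · rw [Sym2.eq_swap, h₁, Sym2.eq_swap]

theorem HasGoodPair.of_comp_neg (h : HasGoodPair G c x fun j ↦ y (-j)) : HasGoodPair G c x y := by
  obtain ⟨s, s', t, t', hs, ht, h⟩ := h
  refine ⟨s, s', -t, -t', hs, ?_, h⟩
  rcases ht with rfl | rfl
  · right; ring
  · left; ring

namespace IsBridge

variable {s : ZMod N} {t : ZMod M}

theorem edgeColor_add_natCast (h : IsBridge c x y s t) (hx : IsAltCycle G c x)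
    (hy : IsAltCycle G c y) (r : ℕ) : edgeColor c y (t + r) = edgeColor c x (s + 1 + r) := by
  induction r with
  | zero => simpa [hx.edgeColor_add_one] using h.2
  | succ r ih =>
    push_cast
    rw [← add_assoc, ← add_assoc, hx.edgeColor_add_one, hy.edgeColor_add_one, ih]

theorem add_one_sub_one (h : IsBridge c x y s t) (hx : IsAltCycle G c x) (hy : IsAltCycle G c y)
    (hadj : ∀ i j, G.Adj (x i) (y j)) (hgood : ¬ HasGoodPair G c x y) :
    IsBridge c x y (s + 1) (t - 1) := by
  have hcol : edgeColor c y (t - 1) = edgeColor c x s := by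
    rw [hy.edgeColor_sub_one, h.2, Bool.not_not]
  refine ⟨?_, by rw [hcol, hx.edgeColor_add_one, Bool.not_not]⟩
  rw [hx.edgeColor_add_one, Bool.eq_not]
  intro hcross
  refine hgood ⟨s, s + 1, t, t - 1, .inr rfl, .inl rfl, hadj _ _, hadj _ _, h.1.symm,
    hcross.trans h.1.symm, ?_⟩
  simpa [edgeColor, h.1] using hcol

theorem add_sub_intCast [NeZero N] [NeZero M] (h : IsBridge c x y s t) (hx : IsAltCycle G c x)
    (hy : IsAltCycle G c y) (hadj : ∀ i j, G.Adj (x i) (y j)) (hgood : ¬ HasGoodPair G c x y)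
    (k : ℤ) : IsBridge c x y (s + k) (t - k) := by
  have forward (a : ℕ) : IsBridge c x y (s + a) (t - a) := by
    induction a with
    | zero => simpa using h
    | succ a ih => simpa [add_assoc, sub_sub] using ih.add_one_sub_one hx hy hadj hgood
  have hNM : (N * M : ℤ) ≠ 0 := by simp [NeZero.ne]
  obtain ⟨a, ha⟩ := Int.eq_ofNat_of_zero_le (Int.emod_nonneg k hNM)
  rw [← Int.emod_add_mul_ediv k (N * M), ha]
  simpa using forward a

theorem add_intCast_of_dvd [NeZero N] [NeZero M] (h : IsBridge c x y s t)
    (hx : IsAltCycle G c x) (hy : IsAltCycle G c y) (hadj : ∀ i j, G.Adj (x i) (y j))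
    (hgood : ¬ HasGoodPair G c x y) {a b : ℤ} (hab : (N.gcd M : ℤ) ∣ a + b) :
    IsBridge c x y (s + a) (t + b) := by
  obtain ⟨u, v, huv⟩ : ∃ u v : ℤ, a + b = N * u + M * v := by
    obtain ⟨w, hw⟩ := hab
    exact ⟨N.gcdA M * w, N.gcdB M * w, by rw [hw, Nat.gcd_eq_gcd_ab]; ring⟩
  have hN : ((a - N * u : ℤ) : ZMod N) = a := by simp
  have hM : ((a - N * u : ℤ) : ZMod M) = -b := by
    rw [show a - N * u = M * v - b by linarith]
    simp
  simpa [hN, hM] using h.add_sub_intCast hx hy hadj hgood (a - N * u)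

theorem exists_left [NeZero N] [NeZero M] (h : IsBridge c x y s t) (hx : IsAltCycle G c x)
    (hy : IsAltCycle G c y) (hadj : ∀ i j, G.Adj (x i) (y j)) (hgood : ¬ HasGoodPair G c x y)
    (i : ZMod N) : ∃ j, IsBridge c x y i j := by
  obtain ⟨k, hk⟩ := ZMod.intCast_surjective (i - s)
  exact ⟨t - k, by simpa [hk] using h.add_sub_intCast hx hy hadj hgood k⟩

theorem exists_right [NeZero N] [NeZero M] (h : IsBridge c x y s t) (hx : IsAltCycle G c x)
    (hy : IsAltCycle G c y) (hadj : ∀ i j, G.Adj (x i) (y j)) (hgood : ¬ HasGoodPair G c x y)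
    (j : ZMod M) : ∃ i, IsBridge c x y i j := by
  obtain ⟨k, hk⟩ := ZMod.intCast_surjective (t - j)
  exact ⟨s + k, by simpa [hk] using h.add_sub_intCast hx hy hadj hgood k⟩

theorem even_of_isBridge_add (h : IsBridge c x y s t) (hy : IsAltCycle G c y) {d : ℤ}
    (h' : IsBridge c y x (t + d) s) : Even d := by
  rw [← hy.edgeColor_add_intCast_eq_iff t, h.2, h'.2, Bool.not_not]

end IsBridge

theorem isBridge_comp_neg_right (hy : IsAltCycle G c y) {s : ZMod N} {t : ZMod M} :
    IsBridge c x (fun j ↦ y (-j)) s (-t) ↔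
      c s(x s, y t) = edgeColor c x s ∧ edgeColor c y t = edgeColor c x s := by
  simp [IsBridge, hy.edgeColor_comp_neg]

theorem isBridge_comp_neg_left (hy : IsAltCycle G c y) {s : ZMod N} {t : ZMod M} :
    IsBridge c (fun j ↦ y (-j)) x (-t) s ↔
      c s(x s, y t) = (!edgeColor c y t) ∧ edgeColor c x s = edgeColor c y t := by
  simp [IsBridge, hy.edgeColor_comp_neg, Sym2.eq_swap]

theorem exists_isBridge_or_comp_neg (hy : IsAltCycle G c y)
    (hnsx : ∃ i, Function.Surjective fun j ↦ c s(x i, y j))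
    (hnsy : ∃ j, Function.Surjective fun i ↦ c s(x i, y j)) :
    ((∃ s t, IsBridge c x y s t) ∧ ∃ t s, IsBridge c y x t s) ∨
      (∃ s t, IsBridge c x (fun j ↦ y (-j)) s t) ∧ ∃ t s, IsBridge c (fun j ↦ y (-j)) x t s := by
  -- A cross edge whose color agrees with (differs from) that of the cycle edge leaving one of its
  -- ends is a bridge out of (into) that cycle, for one of the two orientations of `y`. Applying
  -- this to both colors at a vertex of `x` and at a vertex of `y` leaves only the two cases.
  have hbridge (s : ZMod N) (t : ZMod M) :
      (c s(x s, y t) = edgeColor c x s →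
        IsBridge c x y s t ∨ IsBridge c x (fun j ↦ y (-j)) s (-t)) ∧
      (c s(x s, y t) = (!edgeColor c x s) →
        IsBridge c y x t s ∨ IsBridge c (fun j ↦ y (-j)) x (-t) s) ∧
      (c s(x s, y t) = edgeColor c y t →
        IsBridge c y x t s ∨ IsBridge c x (fun j ↦ y (-j)) s (-t)) ∧
      (c s(x s, y t) = (!edgeColor c y t) →
        IsBridge c x y s t ∨ IsBridge c (fun j ↦ y (-j)) x (-t) s) := by
    rw [isBridge_comp_neg_right hy, isBridge_comp_neg_left hy]
    simp only [IsBridge, Sym2.eq_swap (a := y t)]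
    generalize c s(x s, y t) = e, edgeColor c x s = a, edgeColor c y t = b
    decide +revert
  obtain ⟨i, hi⟩ := hnsx
  obtain ⟨j, hj⟩ := hnsy
  obtain ⟨t₁, ht₁⟩ := hi (edgeColor c x i)
  obtain ⟨t₂, ht₂⟩ := hi (!edgeColor c x i)
  obtain ⟨s₁, hs₁⟩ := hj (edgeColor c y j)
  obtain ⟨s₂, hs₂⟩ := hj (!edgeColor c y j)
  have h₁ := (hbridge i t₁).1 ht₁
  have h₂ := (hbridge i t₂).2.1 ht₂
  have h₃ := (hbridge s₁ j).2.2.1 hs₁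
  have h₄ := (hbridge s₂ j).2.2.2 hs₂
  grind

theorem splice_of_lt {i : ZMod N} {j : ZMod M} {p q t : ℕ} (ht : t < p) :
    splice x y i j p q t = x (i + t) :=
  if_pos ht

theorem splice_add {i : ZMod N} {j : ZMod M} {p q r : ℕ} (hr : r < q) :
    splice x y i j p q (p + r) = y (j + r) := by
  simp [splice, hr]

theorem splice_self {i : ZMod N} {j : ZMod M} {p q : ℕ} (hq : 0 < q) :
    splice x y i j p q p = y j := by
  simpa using splice_add (x := x) (y := y) (i := i) (j := j) (p := p) hq

theorem splice_end {i : ZMod N} {j : ZMod M} {p q : ℕ} : splice x y i j p q (p + q) = x i := by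
  simp [splice]

theorem injOn_splice (hx : Function.Injective x) (hy : Function.Injective y)
    (hxy : ∀ i j, x i ≠ y j) {i : ZMod N} {j : ZMod M} {p q : ℕ} (hp : p ≤ N) (hq : q ≤ M) :
    Set.InjOn (splice x y i j p q) (Set.Iio (p + q)) := by
  have hcases {t : ℕ} (ht : t ∈ Set.Iio (p + q)) : t < p ∨ ∃ r < q, p + r = t := by
    rcases lt_or_ge t p with h | h
    · exact .inl h
    · exact .inr ⟨t - p, by grind, by omega⟩
  intro a ha b hb hab
  obtain hap | ⟨a, haq, rfl⟩ := hcases ha <;> obtain hbp | ⟨b, hbq, rfl⟩ := hcases hb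
  · rw [splice_of_lt hap, splice_of_lt hbp] at hab
    exact CharP.natCast_injOn_Iio (ZMod N) N (hap.trans_le hp) (hbp.trans_le hp)
      (add_left_cancel (hx hab))
  · rw [splice_of_lt hap, splice_add hbq] at hab
    exact absurd hab (hxy _ _)
  · rw [splice_add haq, splice_of_lt hbp] at hab
    exact absurd hab.symm (hxy _ _)
  · rw [splice_add haq, splice_add hbq] at hab
    exact congrArg (p + ·) (CharP.natCast_injOn_Iio (ZMod M) M (haq.trans_le hq)
      (hbq.trans_le hq) (add_left_cancel (hy hab)))

theorem splice_adj_and_color (hx : IsAltCycle G c x) (hy : IsAltCycle G c y)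
    (hadj : ∀ i j, G.Adj (x i) (y j)) {i : ZMod N} {j : ZMod M} {p q : ℕ}
    (hq : 0 < q) (hxy : IsBridge c x y (i + p - 1) j) (hyx : IsBridge c y x (j + q - 1) i)
    {t : ℕ} (ht : t < p + q) :
    G.Adj (splice x y i j p q t) (splice x y i j p q (t + 1)) ∧
      c s(splice x y i j p q t, splice x y i j p q (t + 1)) = edgeColor c x (i + t) := by
  have hcolor (r : ℕ) : edgeColor c y (j + r) = edgeColor c x (i + (p + r : ℕ)) := by
    simpa [add_assoc] using hxy.edgeColor_add_natCast hx hy r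
  rcases lt_or_ge t p with htp | htp
  · rw [splice_of_lt htp]
    rcases (Nat.add_one_le_of_lt htp).lt_or_eq with h | rfl
    · rw [splice_of_lt h, Nat.cast_succ, ← add_assoc]
      exact ⟨hx.2.1 _, rfl⟩
    · rw [splice_self hq]
      exact ⟨hadj _ _, by simpa [← add_assoc] using hxy.1⟩
  · obtain ⟨r, rfl⟩ := Nat.exists_eq_add_of_le htp
    have hr : r < q := by omega
    rw [splice_add hr, ← hcolor, add_assoc]
    rcases (Nat.add_one_le_of_lt hr).lt_or_eq with h | rfl
    · rw [splice_add h, Nat.cast_succ, ← add_assoc]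
      exact ⟨hy.2.1 _, rfl⟩
    · rw [splice_end]
      exact ⟨(hadj _ _).symm, by simpa [← add_assoc] using hyx.1⟩

theorem isAltCycle_splice (hx : IsAltCycle G c x) (hy : IsAltCycle G c y)
    (hadj : ∀ i j, G.Adj (x i) (y j)) {i : ZMod N} {j : ZMod M} {p q : ℕ} (hp0 : 0 < p)
    (hpN : p ≤ N) (hq0 : 0 < q) (hqM : q ≤ M) (hxy : IsBridge c x y (i + p - 1) j)
    (hyx : IsBridge c y x (j + q - 1) i) :
    IsAltCycle G c fun k : ZMod (p + q) ↦ splice x y i j p q k.val := by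
  have : NeZero (p + q) := ⟨by omega⟩
  have hstep {t : ℕ} (ht : t < p + q) := splice_adj_and_color hx hy hadj hq0 hxy hyx ht
  refine isAltCycle_of_closed_walk (f := fun t ↦ edgeColor c x (i + t)) ?_
    (injOn_splice hx.1 hy.1 (fun i j ↦ (hadj i j).ne) hpN hqM)
    (fun t ht ↦ (hstep ht).1) (fun t ht ↦ (hstep ht).2) ?_ fun t ↦ ?_
  · rw [splice_end, splice_of_lt hp0, Nat.cast_zero, add_zero]
  · have hout := hxy.edgeColor_add_natCast hx hy q
    have hback := hyx.edgeColor_add_natCast hy hx 0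
    simp only [Nat.cast_zero, add_zero, sub_add_cancel] at hout hback ⊢
    rw [hback, hout, Nat.cast_add, add_assoc]
  · rw [Nat.cast_succ, ← add_assoc, hx.edgeColor_add_one]

theorem exists_add_eq_and_two_mul_dvd_sub {g a b l : ℕ} {d : ℤ} (hg : 0 < g) (ha : g ≤ a)
    (hb : g ≤ b) (hl : Even l) (hd : Even d) (hgl : g < l) (hlg : l + g ≤ a + b + 1) :
    ∃ p q : ℕ, p + q = l ∧ 0 < p ∧ p ≤ a ∧ 0 < q ∧ q ≤ b ∧ (2 * g : ℤ) ∣ q - p - d := by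
  obtain ⟨h, rfl⟩ := hl
  obtain ⟨e, rfl⟩ := hd
  -- All `g` consecutive values from `max 1 (l - b)` on are admissible for `p`.
  obtain ⟨r, hrg, hr⟩ :=
    Int.existsUnique_equiv_nat (h - e - max 1 (h + h - b : ℕ)) (b := g) (by omega)
  obtain ⟨w, hw⟩ := hr.dvd
  refine ⟨max 1 (h + h - b) + r, h + h - (max 1 (h + h - b) + r), by omega, by omega, by omega,
    by omega, by omega, w, ?_⟩
  rw [Nat.cast_sub (by omega)]
  push_cast at hw ⊢
  linear_combination 2 * hw

theorem exists_isAltCycle_mem_left_of_isBridge {n m : ℕ} [NeZero n] [NeZero m]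
    {x : ZMod (2 * n) → V} {y : ZMod (2 * m) → V} (hx : IsAltCycle G c x) (hy : IsAltCycle G c y)
    (hadj : ∀ i j, G.Adj (x i) (y j)) (hgood : ¬ HasGoodPair G c x y)
    (hxy : ∃ s t, IsBridge c x y s t) (hyx : ∃ t s, IsBridge c y x t s) {l : ℕ} (hl : Even l)
    (hgl : n.gcd m < l) (hlg : l + n.gcd m ≤ 2 * (n + m) + 1) (i : ZMod (2 * n)) :
    ∃ z : ZMod l → V, IsAltCycle G c z ∧ x i ∈ Set.range z := by
  have hadj' (j : ZMod (2 * m)) (i : ZMod (2 * n)) : G.Adj (y j) (x i) := (hadj i j).symm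
  have hgood' : ¬ HasGoodPair G c y x := mt HasGoodPair.symm hgood
  obtain ⟨s, t, hxy⟩ := hxy
  obtain ⟨t', s', hyx⟩ := hyx
  obtain ⟨j, hj⟩ := hxy.exists_left hx hy hadj hgood i
  obtain ⟨j', hj'⟩ := hyx.exists_right hy hx hadj' hgood' i
  obtain ⟨d, hd⟩ := ZMod.intCast_surjective (j' - j)
  obtain rfl : j + d = j' := by rw [hd, add_sub_cancel]
  have hn := NeZero.pos n
  have hm := NeZero.pos m
  have hgn := Nat.gcd_le_left m hn
  have hgm := Nat.gcd_le_right n hm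
  obtain ⟨p, q, rfl, hp0, hpn, hq0, hqm, hdvd⟩ :=
    exists_add_eq_and_two_mul_dvd_sub (a := 2 * n) (b := 2 * m) (Nat.gcd_pos_of_pos_left m hn)
      (by omega) (by omega) hl (hj.even_of_isBridge_add hy hj') hgl (by omega)
  have hout : IsBridge c x y (i + p - 1) (j - (p - 1)) := by
    simpa [add_sub_assoc] using hj.add_sub_intCast hx hy hadj hgood (p - 1)
  have hback : IsBridge c y x (j - (p - 1) + q - 1) i := by
    have hdvd' : ((2 * m).gcd (2 * n) : ℤ) ∣ (q - p - d) + 0 := by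
      rwa [Nat.gcd_mul_left, Nat.gcd_comm, add_zero, Nat.cast_mul, Nat.cast_two]
    convert hj'.add_intCast_of_dvd hy hx hadj' hgood' hdvd' using 1
    · push_cast; ring
    · simp
  exact ⟨_, isAltCycle_splice hx hy hadj hp0 hpn hq0 hqm hout hback, 0, by
    simpa using splice_of_lt hp0⟩

theorem exists_isAltCycle_mem_of_isBridge {n m : ℕ} [NeZero n] [NeZero m] {x : ZMod (2 * n) → V}
    {y : ZMod (2 * m) → V} (hx : IsAltCycle G c x) (hy : IsAltCycle G c y)
    (hadj : ∀ i j, G.Adj (x i) (y j)) (hgood : ¬ HasGoodPair G c x y)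
    (hxy : ∃ s t, IsBridge c x y s t) (hyx : ∃ t s, IsBridge c y x t s) {l : ℕ} (hl : Even l)
    (hgl : n.gcd m < l) (hlg : l + n.gcd m ≤ 2 * (n + m) + 1) {v : V}
    (hv : v ∈ Set.range x ∪ Set.range y) :
    ∃ z : ZMod l → V, IsAltCycle G c z ∧ v ∈ Set.range z := by
  rcases hv with ⟨i, rfl⟩ | ⟨j, rfl⟩
  · exact exists_isAltCycle_mem_left_of_isBridge hx hy hadj hgood hxy hyx hl hgl hlg i
  · rw [Nat.gcd_comm] at hgl hlg
    rw [add_comm n m] at hlg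
    exact exists_isAltCycle_mem_left_of_isBridge hy hx (fun j i ↦ (hadj i j).symm)
      (mt HasGoodPair.symm hgood) hyx hxy hl hgl hlg j

theorem surjective_bool_of_ne {α : Type*} {f : α → Bool} {a b : α} (h : f a ≠ f b) :
    Function.Surjective f := by
  intro e
  by_contra! he
  exact h (by rw [Bool.eq_not.mpr (he a), Bool.eq_not.mpr (he b)])

theorem surjective_of_not_singularX {i : ZMod N} (h : ¬ SingularX c x y i) :
    Function.Surjective fun j ↦ c s(x i, y j) := by
  by_contra hsurj
  exact h ⟨⟨0, trivial⟩, fun j j' ↦ not_not.mp fun hne ↦ hsurj (surjective_bool_of_ne hne)⟩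

theorem surjective_of_not_singularY {j : ZMod M} (h : ¬ SingularY c x y j) :
    Function.Surjective fun i ↦ c s(x i, y j) := by
  by_contra hsurj
  exact h ⟨⟨0, trivial⟩, fun i i' ↦ not_not.mp fun hne ↦ hsurj (surjective_bool_of_ne hne)⟩

end

theorem alt_cycles_middle_general {V : Type*} {G : SimpleGraph V} {c : Sym2 V → Bool}
    {n m : ℕ} (hn : 0 < n) (hm : 0 < m) {x : ZMod (2 * n) → V} {y : ZMod (2 * m) → V}
    (hx : IsAltCycle G c x) (hy : IsAltCycle G c y) (hadj : ∀ i j, G.Adj (x i) (y j))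
    (hgood : ¬ HasGoodPair G c x y) (hnsx : ∃ i, ¬ SingularX c x y i)
    (hnsy : ∃ j, ¬ SingularY c x y j) {v : V} (hv : v ∈ Set.range x ∪ Set.range y) {l : ℕ}
    (hl : Even l) (hgl : n.gcd m < l) (hlg : l + n.gcd m ≤ 2 * (n + m) + 1) :
    ∃ z : ZMod l → V, IsAltCycle G c z ∧ v ∈ Set.range z := by
  have : NeZero n := ⟨hn.ne'⟩
  have : NeZero m := ⟨hm.ne'⟩
  rcases exists_isBridge_or_comp_neg hy (hnsx.imp fun _ ↦ surjective_of_not_singularX)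
    (hnsy.imp fun _ ↦ surjective_of_not_singularY) with ⟨hxy, hyx⟩ | ⟨hxy, hyx⟩
  · exact exists_isAltCycle_mem_of_isBridge hx hy hadj hgood hxy hyx hl hgl hlg hv
  · rw [← neg_surjective.range_comp y] at hv
    exact exists_isAltCycle_mem_of_isBridge hx hy.comp_neg (fun i j ↦ hadj i (-j))
      (mt HasGoodPair.of_comp_neg hgood) hxy hyx hl hgl hlg hv

/-- Let `G ∈ G₁ ⊕ G₂` where `G₁`, `G₂` have Hamiltonian alternating
cycles `C₁ = x` (length `2n`), `C₂ = y` (length `2m`). If `G` has no good pair and each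
`Cᵢ` has a vertex that is non-singular with respect to `C_{3-i}`, then for each vertex
`v` of `G` and each even `l ∈ [4·min n m, 2·max n m]` there is an alternating cycle of
length `l` in `G` passing through `v`. -/
theorem alt_cycles_middle {V : Type*} (G : SimpleGraph V) (c : Sym2 V → Bool)
    {n m : ℕ} (hn : 0 < n) (hm : 0 < m)
    (x : ZMod (2 * n) → V) (y : ZMod (2 * m) → V)
    (hG : IsCGSHam G c x y) (hgp : ¬ HasGoodPair G c x y)
    (hns1 : ∃ i, ¬ SingularX c x y i) (hns2 : ∃ j, ¬ SingularY c x y j) :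
    ∀ v : V, ∀ l : ℕ, Even l → 4 * min n m ≤ l → l ≤ 2 * max n m →
      ∃ z : ZMod l → V, IsAltCycle G c z ∧ v ∈ Set.range z := by
  intro v l hl hmin hmax
  have hgn := Nat.gcd_le_left m hn
  have hgm := Nat.gcd_le_right n hm
  exact alt_cycles_middle_general hn hm hG.1 hG.2.1 hG.2.2.2.2 hgp hns1 hns2 (hG.2.2.2.1 v) hl
    (by omega) (by omega)
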